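/- A solvable group of finite abelian rank with no proper subgroups of finite index is nilpotent; consequently, if G is a solvable group with no maximal subgroups and G is not nilpotent, then G has infinite (at least countable) abelian rank. -/

import Mathlib

/-- `G` has finite abelian (Prüfer) rank: a uniform bound on the minimal number of
generators of its finitely generated subgroups. -/
def HasFiniteRank (G : Type*) [Group G] : Prop :=
  ∃ r : ℕ, ∀ H : Subgroup G, H.FG →
    ∃ S : Finset G, S.card ≤ r ∧ Subgroup.closure (S : Set G) = H

set_option linter.style.haveILetI false

open scoped commutatorElement
/-- no proper subgroup of finite index -/
def NoFI (G : Type*) [Group G] : Prop := ∀ H : Subgroup G, H.index ≠ 0 → H = ⊤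

theorem NoFI.of_surjective {G H : Type*} [Group G] [Group H] (hG : NoFI G) (f : G →* H)
    (hf : Function.Surjective f) : NoFI H := by
  intro K hK
  have := hG (K.comap f) (by rwa [Subgroup.index_comap_of_surjective _ hf])
  rw [eq_top_iff]
  intro x _
  obtain ⟨y, rfl⟩ := hf x
  have : y ∈ K.comap f := by rw [this]; trivial
  exact this

theorem HasFiniteRank.of_surjective {G H : Type*} [Group G] [Group H] (hG : HasFiniteRank G)
    (f : G →* H) (hf : Function.Surjective f) : HasFiniteRank H := by
  classical
  obtain ⟨r, hr⟩ := hG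
  refine ⟨r, fun K hK => ?_⟩
  obtain ⟨S, rfl⟩ := hK
  choose g hg using hf
  obtain ⟨T, hT, hT2⟩ := hr (Subgroup.closure ((S.image g : Finset G) : Set G)) ⟨_, rfl⟩
  refine ⟨T.image f, Finset.card_image_le.trans hT, ?_⟩
  have h2 := congrArg (Subgroup.map f) hT2
  rw [MonoidHom.map_closure, MonoidHom.map_closure] at h2
  simpa [Set.image_image, hg] using h2

theorem NoFI.monoidHom_trivial {G M : Type*} [Group G] [Monoid M] [Finite M] (hG : NoFI G)
    (f : G →* M) (g : G) : f g = 1 := by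
  have h := hG f.toHomUnits.ker (Subgroup.FiniteIndex.index_ne_zero)
  have : g ∈ f.toHomUnits.ker := by rw [h]; trivial
  rw [MonoidHom.mem_ker] at this
  have := congrArg Units.val this
  simpa using this

theorem NoFI.smul_eq {G X : Type*} [Group G] [MulAction G X] (hG : NoFI G) (x : X)
    (S : Set X) (hS : S.Finite) (h : ∀ g : G, g • x ∈ S) (g : G) : g • x = x := by
  have hfin : (MulAction.orbit G x).Finite := hS.subset (by rintro _ ⟨g, rfl⟩; exact h g)
  have h1 : (MulAction.stabilizer G x).index ≠ 0 := by
    rw [MulAction.index_stabilizer]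
    exact Set.ncard_ne_zero_of_mem (MulAction.mem_orbit_self x) hfin
  have : g ∈ MulAction.stabilizer G x := by rw [hG _ h1]; trivial
  exact this

/-- A finite normal subgroup is central -/
theorem NoFI.finite_normal_le_center {G : Type*} [Group G] (hG : NoFI G) (B : Subgroup G)
    [B.Normal] (hB : (B : Set G).Finite) : B ≤ Subgroup.center G := by
  intro b hb
  rw [Subgroup.mem_center_iff]
  intro g
  have := hG.smul_eq (G := G) (X := G) (g := g)
  have h2 := @NoFI.smul_eq G G _ (MulAction.compHom G (MulAut.conj : G →* MulAut G)) hG b B hB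
    (fun g => by
      change g * b * g⁻¹ ∈ B
      exact Subgroup.Normal.conj_mem inferInstance b hb g) g
  have h3 : g * b * g⁻¹ = b := h2
  rw [mul_inv_eq_iff_eq_mul] at h3
  exact h3

theorem HasFiniteRank.finite_of_exponent {G : Type*} [Group G] (hG : HasFiniteRank G)
    (S : Subgroup G) (hc : ∀ a ∈ S, ∀ b ∈ S, a * b = b * a) (m : ℕ) (hm : 0 < m)
    (he : ∀ a ∈ S, a ^ m = 1) : (S : Set G).Finite := by
  classical
  obtain ⟨r, hr⟩ := hG
  by_contra hinf
  obtain ⟨t, ht, htc⟩ := Set.Infinite.exists_subset_card_eq hinf (m ^ r + 1)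
  obtain ⟨s, hs, hst⟩ := hr (Subgroup.closure (t : Set G)) ⟨t, rfl⟩
  set H := Subgroup.closure (t : Set G) with hH
  have hHS : H ≤ S := (Subgroup.closure_le _).2 ht
  letI : CommGroup H := { (inferInstance : Group H) with
    mul_comm := fun a b => Subtype.ext (hc _ (hHS a.2) _ (hHS b.2)) }
  haveI : Group.FG H := (Group.fg_iff_subgroup_fg H).2 ⟨t, rfl⟩
  have h1 : Nat.card H ∣ m ^ Group.rank H :=
    card_dvd_exponent_pow_rank' H (fun g => Subtype.ext (by simpa using he _ (hHS g.2)))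
  have h2 : Group.rank H ≤ r := by
    have : ∀ (H' : Subgroup G) [Group.FG H'], Subgroup.closure (s : Set G) = H' →
        Group.rank H' ≤ s.card := by
      rintro H' _ rfl
      exact Subgroup.rank_closure_finset_le_card s
    exact (this H hst).trans hs
  have h3 : Nat.card H ≤ m ^ r := (Nat.le_of_dvd (by positivity) h1).trans
    (Nat.pow_le_pow_right hm h2)
  have h4 : Nat.card H ≠ 0 := fun h => by
    rw [h] at h1; have := Nat.eq_zero_of_zero_dvd h1; exact absurd this (by positivity)
  haveI : Finite H := Nat.finite_of_card_ne_zero h4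
  have h5 : t.card ≤ Nat.card H := by
    rw [← Set.ncard_coe_finset, ← Nat.card_coe_set_eq]
    refine Nat.card_le_card_of_injective (fun x : (t : Set G) => (⟨x.1, Subgroup.subset_closure x.2⟩ : H)) ?_
    intro x y h
    exact Subtype.ext (congrArg (fun z : H => (z : G)) h)
  omega

theorem subsingleton_of_abelian_normal {G : Type*} [Group G] [Group.IsSolvable G] (hG : NoFI G)
    (hr : HasFiniteRank G)
    (h : ∀ M : Subgroup G, M.Normal → (∀ a ∈ M, ∀ b ∈ M, a * b = b * a) →
      M ≤ Subgroup.center G ∧ (M : Set G).Finite) : Subsingleton G := by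
  classical
  set Z := Subgroup.center G with hZ
  have hZf : (Z : Set G).Finite := (h Z inferInstance
    (fun a ha b hb => (Subgroup.mem_center_iff.1 ha b).symm)).2
  have hZtop : Z = ⊤ := by
    by_contra hne
    have hex : ∃ n, derivedSeries G n ≤ Z := by
      obtain ⟨n, hn⟩ := (Group.isSolvable_def G).1 inferInstance
      exact ⟨n, hn ▸ bot_le⟩
    obtain ⟨i, hi1, hi2⟩ : ∃ i, ¬ derivedSeries G i ≤ Z ∧ derivedSeries G (i+1) ≤ Z := by
      have h0 : Nat.find hex ≠ 0 := by
        intro h0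
        have := Nat.find_spec hex
        rw [h0, derivedSeries_zero] at this
        exact hne (top_le_iff.1 this)
      obtain ⟨i, hi⟩ := Nat.exists_eq_succ_of_ne_zero h0
      refine ⟨i, Nat.find_min hex (by omega), ?_⟩
      have := Nat.find_spec hex
      rwa [hi] at this
    apply hi1
    set B := derivedSeries G i with hB
    haveI : B.Normal := derivedSeries_normal G i
    have hcomm : ∀ a ∈ B, ∀ b ∈ B, ⁅a, b⁆ ∈ Z := fun a ha b hb => hi2 (by
      rw [derivedSeries_succ]; exact Subgroup.commutator_mem_commutator ha hb)
    haveI : Finite Z := hZf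
    set m := Nat.card Z with hm
    have hmpos : 0 < m := Nat.card_pos
    have hZm : ∀ z ∈ Z, z ^ m = 1 := fun z hz => by
      have := pow_card_eq_one' (x := (⟨z, hz⟩ : Z))
      exact congrArg (Subtype.val) this
    have hpow : ∀ b ∈ B, ∀ c ∈ B, b ^ m * c = c * b ^ m := by
      intro b hb c hc
      have hz := hcomm b hb c hc
      set z := ⁅b, c⁆ with hzdef
      have h1 : c * b * c⁻¹ = z⁻¹ * b := by
        rw [hzdef, commutatorElement_def]; group
      have h2 : (c * b * c⁻¹) ^ m = b ^ m := by
        have hcm : Commute z⁻¹ b := by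
          have := Subgroup.mem_center_iff.1 (Z.inv_mem hz) b
          exact this.symm
        rw [h1, hcm.mul_pow, inv_pow, hZm z hz]; simp
      rw [conj_pow, mul_inv_eq_iff_eq_mul] at h2
      exact h2.symm
    have hpowZ : ∀ b ∈ B, b ^ m ∈ Z := by
      intro b hb
      have := (h (Subgroup.centralizer (B : Set G) ⊓ B) inferInstance (by
        rintro a ⟨ha, ha'⟩ b ⟨hb, hb'⟩
        exact (Subgroup.mem_centralizer_iff.1 ha b hb').symm)).1
      apply this
      refine ⟨?_, B.pow_mem hb m⟩
      refine Subgroup.mem_centralizer_iff.2 ?_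
      intro c hc
      exact (hpow b hb c hc).symm
    have hfin : ((B.map (QuotientGroup.mk' Z) : Subgroup (G ⧸ Z)) : Set (G ⧸ Z)).Finite := by
      apply (hr.of_surjective (QuotientGroup.mk' Z) (QuotientGroup.mk'_surjective Z)).finite_of_exponent _ ?_ m hmpos
      · rintro _ ⟨a, ha, rfl⟩
        rw [← map_pow]
        exact (QuotientGroup.eq_one_iff _).2 (hpowZ a ha)
      · rintro _ ⟨a, ha, rfl⟩ _ ⟨b, hb, rfl⟩
        rw [← commutatorElement_eq_one_iff_mul_comm, ← map_commutatorElement]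
        exact (QuotientGroup.eq_one_iff _).2 (hcomm a ha b hb)
    refine hG.finite_normal_le_center B ?_
    refine Set.Finite.subset (Set.Finite.preimage' hfin (f := QuotientGroup.mk' Z) ?_) ?_
    · rintro q ⟨b, hb, rfl⟩
      refine (hZf.image (fun z => b * z)).subset ?_
      intro x hx
      refine ⟨b⁻¹ * x, ?_, by simp⟩
      exact QuotientGroup.eq.1 (show (b : G ⧸ Z) = x from hx.symm)
    · intro b hb
      exact ⟨b, hb, rfl⟩
  have hfin : Finite G := by
    rw [← Set.finite_univ_iff]
    rw [hZtop] at hZf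
    simpa using hZf
  have hbot : (⊥ : Subgroup G) = ⊤ := hG ⊥ (by
    rw [Subgroup.index_bot]; exact Nat.card_pos.ne')
  exact Subgroup.subsingleton_iff.1 (subsingleton_of_bot_eq_top hbot)

theorem noFI_of_no_coatom {G : Type*} [Group G] (h : ∀ M : Subgroup G, ¬ IsCoatom M) : NoFI G := by
  intro H hH
  by_contra hne
  have hex : ∃ n, ∃ K : Subgroup G, K ≠ ⊤ ∧ K.index = n ∧ n ≠ 0 := ⟨_, H, hne, rfl, hH⟩
  classical
  obtain ⟨K, hK, hKi, hK0⟩ := Nat.find_spec hex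
  refine h K ⟨hK, fun L hL => ?_⟩
  by_contra hLt
  have hfi : K.FiniteIndex := ⟨by rw [hKi]; exact hK0⟩
  have h1 : L.index < K.index := Subgroup.index_strictAnti hL
  have h2 : L.index ≠ 0 := (Subgroup.finiteIndex_of_le hL.le).index_ne_zero
  rw [hKi] at h1
  exact Nat.find_min hex h1 ⟨L, hLt, rfl, h2⟩

theorem NoFI.int_trivial {G : Type*} [Group G] (hG : NoFI G) (f : G →* Multiplicative ℤ) (g : G) :
    f g = 1 := by
  have key : ∀ n : ℕ, n ≠ 0 → (n : ℤ) ∣ (f g).toAdd := by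
    intro n hn
    haveI : NeZero n := ⟨hn⟩
    have := hG.monoidHom_trivial
      ((AddMonoidHom.toMultiplicative (Int.castAddHom (ZMod n))).comp f) g
    have h2 : (((f g).toAdd : ℤ) : ZMod n) = 0 := this
    exact (ZMod.intCast_zmod_eq_zero_iff_dvd _ _).1 h2
  have h0 : (f g).toAdd = 0 := by
    apply Int.eq_zero_of_abs_lt_dvd (key ((f g).toAdd.natAbs + 1) (by omega))
    rw [Int.abs_eq_natAbs]; push_cast; omega
  exact h0

open NumberField in
theorem NoFI.field_trivial {G K : Type*} [Group G] [Field K] [NumberField K] (hG : NoFI G)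
    (f : G →* K) (g : G) : f g = 1 := by
  have hv : ∀ (v : IsDedekindDomain.HeightOneSpectrum (𝓞 K)) (g : G), v.valuation K (f g) = 1 := by
    intro v g
    have h1 := hG.int_trivial ((WithZero.unitsWithZeroEquiv (α := Multiplicative ℤ)).toMonoidHom.comp
      (((v.valuation K).toMonoidWithZeroHom.toMonoidHom).comp f).toHomUnits) g
    have h2 : (((v.valuation K).toMonoidWithZeroHom.toMonoidHom).comp f).toHomUnits g = 1 := by
      apply (WithZero.unitsWithZeroEquiv (α := Multiplicative ℤ)).injective
      rw [map_one]; exact h1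
    exact congrArg Units.val h2
  have hinteg : ∀ g, ∃ x : 𝓞 K, algebraMap (𝓞 K) K x = f g := fun g =>
    IsDedekindDomain.HeightOneSpectrum.mem_integers_of_valuation_le_one K _ (fun v => (hv v g).le)
  choose F hF using hinteg
  have hinj : Function.Injective (algebraMap (𝓞 K) K) := NumberField.RingOfIntegers.coe_injective
  let F' : G →* 𝓞 K :=
    { toFun := F
      map_one' := hinj (by rw [hF]; simp)
      map_mul' := fun a b => hinj (by rw [map_mul, hF, hF, hF, map_mul]) }
  obtain ⟨I, hI⟩ := Ideal.exists_maximal (𝓞 K)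
  have hIb : I ≠ ⊥ := (I.bot_lt_of_maximal (RingOfIntegers.not_isField K)).ne'
  have hmem : ∀ k : ℕ, F g - 1 ∈ I ^ k := by
    intro k
    haveI : Finite (𝓞 K ⧸ I ^ k) := Ideal.finiteQuotientOfFreeOfNeBot _ (pow_ne_zero _ hIb)
    have := hG.monoidHom_trivial ((Ideal.Quotient.mk (I ^ k)).toMonoidHom.comp F') g
    rw [← Ideal.Quotient.eq]
    exact this
  have h0 : F g - 1 ∈ (⨅ i : ℕ, I ^ i : Ideal (𝓞 K)) := by
    rw [Submodule.mem_iInf]; exact hmem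
  rw [Ideal.iInf_pow_eq_bot_of_isDomain I hI.ne_top] at h0
  have h1 : F g = 1 := sub_eq_zero.1 h0
  rw [← hF, h1, map_one]

open scoped Pointwise in
theorem isDomain_of_irred {G K V : Type*} [Group G] (hG : NoFI G) [CommRing K] [Algebra ℚ K]
    [Module.Finite ℚ K] [MulSemiringAction G K] [AddCommGroup V] [Module ℚ V] [Module K V]
    [IsScalarTower ℚ K V] [FaithfulSMul K V] [Nontrivial V]
    (ρ : G → V → V) (hcompat : ∀ g (k : K) v, ρ g (k • v) = (g • k) • ρ g v)
    (hρ0 : ∀ g, ρ g 0 = 0)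
    (irr : ∀ U : Submodule ℚ V, (∀ g, ∀ u ∈ U, ρ g u ∈ U) → U = ⊥ ∨ U = ⊤) : IsDomain K := by
  haveI : IsArtinianRing K := IsArtinianRing.of_finite ℚ K
  obtain ⟨P, hP⟩ := associatedPrimes.nonempty K V
  obtain ⟨hPp, x, hx⟩ := isAssociatedPrime_iff.1 hP
  have hPx : ∀ p ∈ P, p • x = 0 := by
    intro p hp
    rw [hx, Submodule.mem_colon_singleton] at hp
    exact hp
  have hx0 : x ≠ 0 := by
    rintro rfl
    apply hPp.ne_top
    rw [hx, eq_top_iff]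
    intro p _
    rw [Submodule.mem_colon_singleton, smul_zero]
    exact Submodule.zero_mem _
  have hfix : ∀ g : G, g • P = P := by
    refine hG.smul_eq P (Set.range (PrimeSpectrum.asIdeal : PrimeSpectrum K → Ideal K))
      (Set.finite_range _) ?_
    intro g
    exact ⟨⟨g • P, inferInstance⟩, rfl⟩
  let U : Submodule K V :=
    { carrier := {v | ∀ p ∈ P, p • v = 0}
      add_mem' := fun {a b} ha hb p hp => by rw [smul_add, ha p hp, hb p hp, add_zero]
      zero_mem' := fun p _ => smul_zero p
      smul_mem' := fun c a ha p hp => by rw [smul_comm, ha p hp, smul_zero] }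
  have hU : U.restrictScalars ℚ = ⊤ := by
    refine (irr (U.restrictScalars ℚ) ?_).resolve_left ?_
    · intro g u hu p hp
      have h1 : g⁻¹ • p ∈ P := by
        have := Ideal.smul_mem_pointwise_smul g⁻¹ p P hp
        rwa [hfix] at this
      have h2 := hcompat g (g⁻¹ • p) u
      rw [hu _ h1, hρ0, smul_inv_smul] at h2
      exact h2.symm
    · intro h
      have : x ∈ U.restrictScalars ℚ := hPx
      rw [h] at this
      exact hx0 this
  have hPb : P = ⊥ := by
    rw [eq_bot_iff]
    intro p hp
    apply FaithfulSMul.eq_of_smul_eq_smul (M := K) (α := V)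
    intro v
    have : v ∈ U.restrictScalars ℚ := by rw [hU]; trivial
    rw [this p hp, zero_smul]
  rw [hPb] at hPp
  exact (IsDomain.of_bot_isPrime K)

theorem smul_trivial_of_domain {G K : Type*} [Group G] (hG : NoFI G) [CommRing K] [Algebra ℚ K]
    [Module.Finite ℚ K] [MulSemiringAction G K] [IsDomain K] (g : G) (k : K) : g • k = k := by
  refine hG.smul_eq k ((minpoly ℚ k).rootSet K) (Polynomial.rootSet_finite _ _) ?_ g
  intro g
  have hi : IsIntegral ℚ k := Algebra.IsIntegral.isIntegral k
  rw [Polynomial.mem_rootSet]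
  refine ⟨minpoly.ne_zero hi, ?_⟩
  have := Polynomial.aeval_algHom_apply ((MulSemiringAction.toRingHom G K g).toRatAlgHom) k (minpoly ℚ k)
  rw [minpoly.aeval, map_zero] at this
  exact this

theorem scalar_pow_eq_one {G K V : Type*} [Group G] (hG : NoFI G) [Field K] [NumberField K]
    [AddCommGroup V] [Module K V] (ρ : G →* Module.End K V) (m : G) (c : K)
    (h : ∀ v, ρ m v = c • v) : c ^ Module.finrank K V = 1 := by
  have h1 := hG.field_trivial (LinearMap.det.comp ρ) m
  have h2 : ρ m = c • LinearMap.id := by ext v; simp [h]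
  simpa [h2] using h1

theorem scalar_pow_of_isDomain {G K V : Type*} [Group G] (hG : NoFI G) [CommRing K] [IsDomain K]
    [aK : Algebra ℚ K] [Module.Finite ℚ K] [AddCommGroup V] [Nontrivial V] [Module K V]
    [Module.Finite K V] (ρ : G →* Module.End K V) :
    ∃ d : ℕ, 0 < d ∧ ∀ (m : G) (c : K), (∀ v, ρ m v = c • v) → c ^ d = 1 := by
  haveI : IsArtinianRing K := IsArtinianRing.of_finite ℚ K
  haveI hcz : CharZero K := algebraRat.charZero K
  have hfd : ∀ a : Algebra ℚ K, @Module.Finite ℚ K _ _ a.toModule := by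
    intro a
    rwa [Subsingleton.elim a aK]
  letI fK : Field K := (IsArtinianRing.isField_of_isDomain K).toField
  haveI : NumberField K := { to_charZero := hcz, to_finiteDimensional := hfd _ }
  exact ⟨Module.finrank K V, Module.finrank_pos, fun m c h => scalar_pow_eq_one hG ρ m c h⟩

open scoped IsMulCommutative in
theorem central_finite_of_irred {G V : Type*} [Group G] (hG : NoFI G) [AddCommGroup V]
    [Module ℚ V] [FiniteDimensional ℚ V] [Nontrivial V] (ρ : G →* Module.End ℚ V)
    (hρ : Function.Injective ρ)
    (irr : ∀ U : Submodule ℚ V, (∀ g, ∀ u ∈ U, ρ g u ∈ U) → U = ⊥ ∨ U = ⊤)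
    (M : Subgroup G) (hM : M.Normal) (hc : ∀ a ∈ M, ∀ b ∈ M, a * b = b * a) :
    M ≤ Subgroup.center G ∧ (M : Set G).Finite := by
  let K : Subalgebra ℚ (Module.End ℚ V) := Algebra.adjoin ℚ (ρ '' M)
  haveI : IsMulCommutative K := Algebra.isMulCommutative_adjoin ℚ (by
    rintro _ ⟨a, ha, rfl⟩ _ ⟨b, hb, rfl⟩
    rw [← map_mul, ← map_mul, hc a ha b hb])
  have hconj : ∀ (g : G), ∀ k ∈ K, ρ g * k * ρ g⁻¹ ∈ K := by
    intro g k hk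
    have hgg : ρ g⁻¹ * ρ g = 1 := by rw [← map_mul]; simp
    have hgg' : ρ g * ρ g⁻¹ = 1 := by rw [← map_mul]; simp
    induction hk using Algebra.adjoin_induction with
    | mem x hx =>
      obtain ⟨a, ha, rfl⟩ := hx
      rw [← map_mul, ← map_mul]
      exact Algebra.subset_adjoin ⟨_, hM.conj_mem a ha g, rfl⟩
    | algebraMap r =>
      rw [← Algebra.commutes, mul_assoc, hgg', mul_one]
      exact K.algebraMap_mem r
    | add x y _ _ hx hy =>
      rw [mul_add, add_mul]; exact K.add_mem hx hy
    | mul x y _ _ hx hy =>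
      have : ρ g * (x * y) * ρ g⁻¹ = (ρ g * x * ρ g⁻¹) * (ρ g * y * ρ g⁻¹) := by
        simp only [mul_assoc]
        rw [← mul_assoc (ρ g⁻¹) (ρ g), hgg, one_mul]
      rw [this]; exact K.mul_mem hx hy
  letI act : MulSemiringAction G K :=
    { smul := fun g k => ⟨ρ g * k * ρ g⁻¹, hconj g k k.2⟩
      one_smul := fun k => Subtype.ext (by change ρ 1 * k * ρ 1⁻¹ = k; simp)
      mul_smul := fun g h k => Subtype.ext (by
        change ρ (g * h) * k * ρ (g * h)⁻¹ = ρ g * (ρ h * k * ρ h⁻¹) * ρ g⁻¹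
        rw [mul_inv_rev, map_mul, map_mul]; simp only [mul_assoc])
      smul_zero := fun g => Subtype.ext (by change ρ g * 0 * ρ g⁻¹ = 0; simp)
      smul_add := fun g x y => Subtype.ext (by
        change ρ g * (x + y) * ρ g⁻¹ = ρ g * x * ρ g⁻¹ + ρ g * y * ρ g⁻¹
        rw [mul_add, add_mul])
      smul_one := fun g => Subtype.ext (by
        change ρ g * 1 * ρ g⁻¹ = 1; rw [mul_one, ← map_mul]; simp)
      smul_mul := fun g x y => Subtype.ext (by
        change ρ g * (x * y) * ρ g⁻¹ = (ρ g * x * ρ g⁻¹) * (ρ g * y * ρ g⁻¹)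
        have hgg : ρ g⁻¹ * ρ g = 1 := by rw [← map_mul]; simp
        simp only [mul_assoc]
        rw [← mul_assoc (ρ g⁻¹) (ρ g), hgg, one_mul]) }
  have hact : ∀ (g : G) (k : K), ((g • k : K) : Module.End ℚ V) = ρ g * k * ρ g⁻¹ :=
    fun _ _ => rfl
  have hcompat : ∀ g (k : K) v, ρ g (k • v) = (g • k) • ρ g v := by
    intro g k v
    change ρ g ((k : Module.End ℚ V) v) = (ρ g * k * ρ g⁻¹) (ρ g v)
    have : ρ g⁻¹ (ρ g v) = v := by
      rw [← Module.End.mul_apply, ← map_mul]; simp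
    simp [Module.End.mul_apply, this]
  haveI hdom : IsDomain K := isDomain_of_irred hG (fun g => ρ g) hcompat (fun g => map_zero _) irr
  have htriv : ∀ (g : G) (k : K), g • k = k := fun g k => smul_trivial_of_domain hG g k
  have hcen : M ≤ Subgroup.center G := by
    intro m hm
    rw [Subgroup.mem_center_iff]
    intro g
    have h1 := congrArg Subtype.val (htriv g ⟨ρ m, Algebra.subset_adjoin ⟨m, hm, rfl⟩⟩)
    rw [hact] at h1
    have h2 : g * m * g⁻¹ = m := hρ (by rw [map_mul, map_mul]; exact h1)
    exact mul_inv_eq_iff_eq_mul.1 h2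
  refine ⟨hcen, ?_⟩
  let ρ' : G →* Module.End K V :=
    { toFun := fun g => 
        { toFun := ρ g
          map_add' := map_add _
          map_smul' := fun k v => by rw [hcompat, htriv]; rfl }
      map_one' := by ext v; simp
      map_mul' := fun a b => by ext v; simp }
  haveI : Module.Finite K V := Module.Finite.of_restrictScalars_finite ℚ K V
  obtain ⟨d, hpos, hd⟩ := scalar_pow_of_isDomain hG ρ'
  have hroot : ∀ m ∈ M, ∃ k : K, (k : Module.End ℚ V) = ρ m ∧ k ^ d = 1 := by
    intro m hm
    refine ⟨⟨ρ m, Algebra.subset_adjoin ⟨m, hm, rfl⟩⟩, rfl, ?_⟩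
    exact hd m _ (fun v => rfl)
  have hfin : {k : K | k ^ d = 1}.Finite := by
    refine (Polynomial.nthRootsFinset (d) (1 : K)).finite_toSet.subset ?_
    intro k hk
    rw [Finset.mem_coe, Polynomial.mem_nthRootsFinset hpos]
    exact hk
  refine Set.Finite.of_finite_image ((hfin.image Subtype.val).subset ?_) hρ.injOn
  rintro _ ⟨m, hm, rfl⟩
  obtain ⟨k, hk1, hk2⟩ := hroot m hm
  exact ⟨k, hk2, hk1⟩

theorem subsingleton_of_irred {G V : Type*} [Group G] (hG : NoFI G) [Group.IsSolvable G]
    (hr : HasFiniteRank G) [AddCommGroup V]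
    [Module ℚ V] [FiniteDimensional ℚ V] [Nontrivial V] (ρ : G →* Module.End ℚ V)
    (hρ : Function.Injective ρ)
    (irr : ∀ U : Submodule ℚ V, (∀ g, ∀ u ∈ U, ρ g u ∈ U) → U = ⊥ ∨ U = ⊤) : Subsingleton G :=
  subsingleton_of_abelian_normal hG hr (fun M hM hc => central_finite_of_irred hG ρ hρ irr M hM hc)

theorem fixed_of_irred {G V : Type*} [Group G] (hG : NoFI G) (hs : Group.IsSolvable G)
    (hr : HasFiniteRank G) [AddCommGroup V]
    [Module ℚ V] [FiniteDimensional ℚ V] [Nontrivial V] (ρ : G →* Module.End ℚ V)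
    (irr : ∀ U : Submodule ℚ V, (∀ g, ∀ u ∈ U, ρ g u ∈ U) → U = ⊥ ∨ U = ⊤) (g : G) : ρ g = 1 := by
  have hsurj := ρ.toHomUnits.rangeRestrict_surjective
  have hG' : NoFI ρ.toHomUnits.range := hG.of_surjective _ hsurj
  have hr' : HasFiniteRank ρ.toHomUnits.range := hr.of_surjective _ hsurj
  have hs' : Group.IsSolvable ρ.toHomUnits.range := Group.isSolvable_of_surjective hsurj
  have hsub : Subsingleton ρ.toHomUnits.range := by
    refine subsingleton_of_irred hG' hr'
      ((Units.coeHom (Module.End ℚ V)).comp ρ.toHomUnits.range.subtype)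
      (Units.val_injective.comp Subtype.val_injective) ?_
    intro U hU
    refine irr U (fun g u hu => ?_)
    exact hU (ρ.toHomUnits.rangeRestrict g) u hu
  have h1 : ρ.toHomUnits.rangeRestrict g = 1 := Subsingleton.elim _ _
  have h2 : ρ.toHomUnits g = 1 := congrArg Subtype.val h1
  exact congrArg Units.val h2

theorem exists_fixed {G : Type*} [Group G] (hG : NoFI G) (hs : Group.IsSolvable G)
    (hr : HasFiniteRank G) (n : ℕ) : ∀ (V : Type*) [AddCommGroup V]
    [Module ℚ V] [FiniteDimensional ℚ V] [Nontrivial V] (ρ : G →* Module.End ℚ V),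
    Module.finrank ℚ V ≤ n → ∃ v : V, v ≠ 0 ∧ ∀ g, ρ g v = v := by
  induction n with
  | zero =>
    intro V _ _ _ _ ρ h
    have : 0 < Module.finrank ℚ V := Module.finrank_pos
    omega
  | succ n ih =>
    intro V _ _ _ _ ρ h
    by_cases irr : ∀ U : Submodule ℚ V, (∀ g, ∀ u ∈ U, ρ g u ∈ U) → U = ⊥ ∨ U = ⊤
    · obtain ⟨v, hv⟩ := exists_ne (0 : V)
      refine ⟨v, hv, fun g => ?_⟩
      rw [fixed_of_irred hG hs hr ρ irr g]; rfl
    · push Not at irr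
      obtain ⟨U, hU, hb, ht⟩ := irr
      let ρ' : G →* Module.End ℚ U :=
        { toFun := fun g => (ρ g).restrict (hU g)
          map_one' := by ext v; simp
          map_mul' := fun a b => by ext v; simp }
      haveI : Nontrivial U := Submodule.nontrivial_iff_ne_bot.2 hb
      have hlt : Module.finrank ℚ U < Module.finrank ℚ V := Submodule.finrank_lt ht
      obtain ⟨u, hu, hfix⟩ := ih U ρ' (by omega)
      exact ⟨u, by simpa using hu, fun g => congrArg Subtype.val (hfix g)⟩

theorem HasFiniteRank.subgroup {G : Type*} [Group G] (hG : HasFiniteRank G) (A : Subgroup G) :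
    HasFiniteRank A := by
  classical
  obtain ⟨r, hr⟩ := hG
  refine ⟨r, fun K hK => ?_⟩
  obtain ⟨S, rfl⟩ := hK
  obtain ⟨T, hT, hT2⟩ := hr (Subgroup.closure ((S.image A.subtype : Finset G) : Set G)) ⟨_, rfl⟩
  have h2 : (Subgroup.closure (S : Set A)).map A.subtype = Subgroup.closure (T : Set G) := by
    rw [hT2, MonoidHom.map_closure]; simp
  have hTA : ∀ x ∈ T, x ∈ A := by
    intro x hx
    have : x ∈ (Subgroup.closure (S : Set A)).map A.subtype := by
      rw [h2]; exact Subgroup.subset_closure hx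
    obtain ⟨a, _, rfl⟩ := this
    exact a.2
  refine ⟨T.subtype (· ∈ A), (Finset.card_subtype _ _).le.trans
    ((Finset.card_filter_le _ _).trans hT), ?_⟩
  apply Subgroup.map_injective A.subtype_injective
  rw [h2, MonoidHom.map_closure]
  congr 1
  ext x
  simp only [Set.mem_image, Finset.mem_coe, Finset.mem_subtype]
  constructor
  · rintro ⟨a, ha, rfl⟩; exact ha
  · intro hx; exact ⟨⟨x, hTA x hx⟩, hx, rfl⟩

theorem HasFiniteRank.finiteDimensional_hom {A : Type*} [Group A] (hA : HasFiniteRank A) :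
    FiniteDimensional ℚ (Additive A →+ ℚ) := by
  classical
  obtain ⟨r, hr⟩ := hA
  have hrank : Module.rank ℚ (Additive A →+ ℚ) ≤ r := by
    apply rank_le
    intro s hs
    let ev : A → (s → ℚ) := fun a i => i.1 (Additive.ofMul a)
    have hev1 : ev 1 = 0 := by ext i; simp [ev]
    have hevm : ∀ a b, ev (a * b) = ev a + ev b := fun a b => by ext i; simp [ev]
    have hevi : ∀ a, ev a⁻¹ = - ev a := fun a => by ext i; simp [ev]
    have hspan : Submodule.span ℚ (Set.range ev) = ⊤ := by
      by_contra hne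
      obtain ⟨f, hf0, hf⟩ := Submodule.exists_le_ker_of_lt_top _ (lt_top_iff_ne_top.2 hne)
      apply hf0
      have hfs : ∀ x : s → ℚ, f x = ∑ i, x i * f (Pi.single i 1) := by
        intro x
        have := LinearMap.pi_apply_eq_sum_univ f x
        simp only [smul_eq_mul] at this
        rw [this]
        refine Finset.sum_congr rfl fun i _ => ?_
        congr 2
        ext j
        simp [Pi.single_apply, eq_comm]
      have hz : ∑ i : s, f (Pi.single i 1) • (i : Additive A →+ ℚ) = 0 := by
        refine AddMonoidHom.ext fun a => ?_
        have h1 : f (ev a.toMul) = 0 := hf (Submodule.subset_span ⟨_, rfl⟩)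
        rw [hfs] at h1
        rw [AddMonoidHom.finsetSum_apply]
        simp only [AddMonoidHom.smul_apply, smul_eq_mul, AddMonoidHom.zero_apply]
        rw [← h1]
        exact Finset.sum_congr rfl fun i _ => mul_comm _ _
      have hc := Fintype.linearIndependent_iff.1 hs _ hz
      ext i
      simpa using hc i
    obtain ⟨t, htr, hts⟩ := Submodule.fg_span_iff_fg_span_finset_subset (Set.range ev) |>.1
      (IsNoetherian.noetherian (R := ℚ) _)
    choose! p hp using fun (x : s → ℚ) (hx : x ∈ t) => htr hx
    obtain ⟨T, hT, hTc⟩ := hr (Subgroup.closure ((t.image p : Finset A) : Set A)) ⟨_, rfl⟩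
    let S : Subgroup A :=
      { carrier := {a | ev a ∈ Submodule.span ℚ ((T.image ev : Finset _) : Set (s → ℚ))}
        mul_mem' := fun {a b} ha hb => by
          simp only [Set.mem_ofPred_eq] at *
          rw [hevm]; exact Submodule.add_mem _ ha hb
        one_mem' := by simp only [Set.mem_ofPred_eq]; rw [hev1]; exact Submodule.zero_mem _
        inv_mem' := fun {a} ha => by
          simp only [Set.mem_ofPred_eq] at *
          rw [hevi]; exact Submodule.neg_mem _ ha }
    have hTS : Subgroup.closure (T : Set A) ≤ S := by
      rw [Subgroup.closure_le]
      intro a ha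
      exact Submodule.subset_span (by simpa using ⟨a, ha, rfl⟩)
    have htop : Submodule.span ℚ ((T.image ev : Finset _) : Set (s → ℚ)) = ⊤ := by
      rw [eq_top_iff, ← hspan, hts, Submodule.span_le]
      intro x hx
      have h1 : p x ∈ S := hTS (by
        rw [hTc]; exact Subgroup.subset_closure (by simpa using ⟨x, hx, rfl⟩))
      have h2 : ev (p x) ∈ Submodule.span ℚ ((T.image ev : Finset _) : Set (s → ℚ)) := h1
      rwa [hp x hx] at h2
    have h3 := finrank_span_finset_le_card (R := ℚ) (T.image ev)
    rw [Set.finrank, htop, finrank_top, Module.finrank_fintype_fun_eq_card, Fintype.card_coe] at h3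
    exact h3.trans (Finset.card_image_le.trans hT)
  exact Module.rank_lt_aleph0_iff.1 (hrank.trans_lt Cardinal.natCast_lt_aleph0)

theorem finite_order_of_hom_zero {A : Type*} [CommGroup A] (a : A)
    (h : ∀ φ : Additive A →+ ℚ, φ (Additive.ofMul a) = 0) : ∃ k : ℕ, 0 < k ∧ a ^ k = 1 := by
  by_contra hno
  push Not at hno
  have hinj : Function.Injective (zmultiplesHom (Additive A) (Additive.ofMul a)) := by
    rw [injective_iff_map_eq_zero]
    intro n hn
    by_contra hn0
    apply hno n.natAbs (by omega)
    have h1 : a ^ n = 1 := hn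
    rcases Int.natAbs_eq n with h2 | h2
    · rw [h2, zpow_natCast] at h1; exact h1
    · rw [h2, zpow_neg, zpow_natCast, inv_eq_one] at h1; exact h1
  obtain ⟨φ, hφ⟩ := (Module.Baer.of_divisible ℚ).extension_property_addMonoidHom _ hinj
    (Int.castAddHom ℚ)
  have h1 := DFunLike.congr_fun hφ 1
  have h2 := h φ
  simp [h2] at h1

open scoped commutatorElement in
theorem key {G : Type*} [Group G] (hG : NoFI G) (hs : Group.IsSolvable G) (hr : HasFiniteRank G)
    (A : Subgroup G) [hAn : A.Normal] (hc : ∀ a ∈ A, ∀ b ∈ A, a * b = b * a) (c : ℕ)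
    (hA : (⊤ : Subgroup G).lowerCentralSeries c ≤ A) :
    ∃ n, (⊤ : Subgroup G).lowerCentralSeries n = ⊥ := by
  haveI hfd : FiniteDimensional ℚ (Additive A →+ ℚ) := (hr.subgroup A).finiteDimensional_hom
  let ρ : G →* Module.End ℚ (Additive A →+ ℚ) :=
    { toFun := fun g =>
        { toFun := fun φ => φ.comp (MonoidHom.toAdditive (MulAut.conjNormal g⁻¹ : MulAut A).toMonoidHom)
          map_add' := fun φ ψ => rfl
          map_smul' := fun c φ => rfl }
      map_one' := by ext φ a; simp
      map_mul' := fun g h => by ext φ a; simp }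
  have hρ : ∀ g φ (a : A), ρ g φ (Additive.ofMul a) = φ (Additive.ofMul (MulAut.conjNormal g⁻¹ a)) :=
    fun _ _ _ => rfl
  let pA : Submodule ℚ (Additive A →+ ℚ) → Subgroup A := fun U =>
    { carrier := {a | ∀ φ ∈ U, φ (Additive.ofMul a) = 0}
      mul_mem' := fun {a b} ha hb φ hφ => by rw [ofMul_mul, map_add, ha φ hφ, hb φ hφ, add_zero]
      one_mem' := fun φ _ => by simp
      inv_mem' := fun {a} ha φ hφ => by rw [ofMul_inv, map_neg, ha φ hφ, neg_zero] }
  let S : Set (Submodule ℚ (Additive A →+ ℚ)) := {U | (∀ g, ∀ u ∈ U, ρ g u ∈ U) ∧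
    ∃ n, (⊤ : Subgroup G).lowerCentralSeries n ≤ (pA U).map A.subtype}
  have hbot : ⊥ ∈ S := by
    refine ⟨fun g u hu => ?_, c, fun x hx => ?_⟩
    · rw [Submodule.mem_bot] at hu ⊢; rw [hu, map_zero]
    · refine ⟨⟨x, hA hx⟩, fun φ hφ => ?_, rfl⟩
      rw [(Submodule.mem_bot ℚ).1 hφ]; rfl
  obtain ⟨U, ⟨hUinv, n, hn⟩, hmax⟩ := set_has_maximal_iff_noetherian.2
    (inferInstance : IsNoetherian ℚ (Additive A →+ ℚ)) S ⟨_, hbot⟩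
  have hUtop : U = ⊤ := by
    by_contra hne
    haveI : Nontrivial ((Additive A →+ ℚ) ⧸ U) := Submodule.Quotient.nontrivial_iff.2 hne
    let ρq : G →* Module.End ℚ ((Additive A →+ ℚ) ⧸ U) :=
      { toFun := fun g => U.mapQ U (ρ g) (hUinv g)
        map_one' := by apply Submodule.linearMap_qext; ext φ : 1; simp
        map_mul' := fun g h => by apply Submodule.linearMap_qext; ext φ : 1; simp }
    obtain ⟨v, hv0, hv⟩ := exists_fixed hG hs hr _ _ ρq le_rfl
    obtain ⟨φ0, rfl⟩ := Submodule.Quotient.mk_surjective U v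
    have hφ0 : ∀ g, ρ g φ0 - φ0 ∈ U := fun g => (Submodule.Quotient.eq U).1 (hv g)
    let U' : Submodule ℚ (Additive A →+ ℚ) :=
      { carrier := {φ | ∀ g, ρ g φ - φ ∈ U}
        add_mem' := fun {a b} ha hb g => by
          rw [map_add, add_sub_add_comm]; exact U.add_mem (ha g) (hb g)
        zero_mem' := fun g => by simp
        smul_mem' := fun c a ha g => by
          rw [map_smul, ← smul_sub]; exact U.smul_mem c (ha g) }
    refine hmax U' ⟨?_, n + 1, ?_⟩ ?_
    · intro h φ hφ g
      have h1 := U.sub_mem (hφ (g * h)) (hφ h)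
      have h2 : ρ (g * h) φ - φ - (ρ h φ - φ) = ρ g (ρ h φ) - ρ h φ := by
        rw [map_mul, Module.End.mul_apply]; abel
      rwa [h2] at h1
    · rw [Subgroup.lowerCentralSeries_succ, Subgroup.commutator_le]
      intro x hx q _
      obtain ⟨a, ha, rfl⟩ := hn hx
      refine ⟨a * MulAut.conjNormal q a⁻¹, fun φ hφ => ?_, ?_⟩
      · have h1 := ha _ (hφ q⁻¹)
        rw [AddMonoidHom.sub_apply, hρ, inv_inv] at h1
        rw [map_inv, ofMul_mul, ofMul_inv, map_add, map_neg]
        linarith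
      · simp [commutatorElement_def, mul_assoc]
    · refine lt_of_le_of_ne ?_ ?_
      · intro φ hφ g
        exact U.sub_mem (hUinv g φ hφ) hφ
      · intro h
        apply hv0
        rw [Submodule.Quotient.mk_eq_zero, h]
        exact hφ0
  refine ⟨n + 1, ?_⟩
  rw [Subgroup.lowerCentralSeries_succ, Subgroup.commutator_eq_bot_iff_le_centralizer,
    Subgroup.coe_top, Subgroup.centralizer_univ]
  intro x hx
  obtain ⟨a, ha, rfl⟩ := hn hx
  letI : CommGroup A := { (inferInstance : Group A) with
    mul_comm := fun a b => Subtype.ext (hc _ a.2 _ b.2) }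
  obtain ⟨k, hk, hak⟩ := finite_order_of_hom_zero a (fun φ => ha φ (by rw [hUtop]; trivial))
  let T : Subgroup G :=
    { carrier := {x | x ∈ A ∧ x ^ k = 1}
      mul_mem' := fun {x y} hx hy => ⟨A.mul_mem hx.1 hy.1, by
        rw [(show Commute x y from hc x hx.1 y hy.1).mul_pow, hx.2, hy.2, one_mul]⟩
      one_mem' := ⟨A.one_mem, one_pow k⟩
      inv_mem' := fun {x} hx => ⟨A.inv_mem hx.1, by rw [inv_pow, hx.2, inv_one]⟩ }
  haveI : T.Normal := ⟨fun x hx g => ⟨hAn.conj_mem x hx.1 g, by rw [conj_pow, hx.2]; simp⟩⟩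
  refine hG.finite_normal_le_center T ?_ ⟨a.2, by simpa using congrArg Subtype.val hak⟩
  exact hr.finite_of_exponent T (fun x hx y hy => hc x hx.1 y hy.1) k hk (fun x hx => hx.2)

theorem nilpotent_of_noFI {G : Type*} [Group G] (hG : NoFI G) (hs : Group.IsSolvable G)
    (hr : HasFiniteRank G) : Group.IsNilpotent G := by
  have main : ∀ i, ∃ c, (⊤ : Subgroup G).lowerCentralSeries c ≤ derivedSeries G i := by
    intro i
    induction i with
    | zero => exact ⟨0, by simp⟩
    | succ i ih =>
      obtain ⟨c, hc⟩ := ih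
      let D := derivedSeries G (i + 1)
      haveI : D.Normal := derivedSeries_normal G (i + 1)
      haveI : (derivedSeries G i).Normal := derivedSeries_normal G i
      have hsurj := QuotientGroup.mk'_surjective D
      haveI : ((derivedSeries G i).map (QuotientGroup.mk' D)).Normal :=
        Subgroup.Normal.map inferInstance _ hsurj
      have hmap : ∀ n, ((⊤ : Subgroup G).lowerCentralSeries n).map (QuotientGroup.mk' D) =
          (⊤ : Subgroup (G ⧸ D)).lowerCentralSeries n := by
        intro n
        rw [Subgroup.map_lowerCentralSeries, Subgroup.map_top_of_surjective _ hsurj]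
      obtain ⟨n, hn⟩ := key (G := G ⧸ D) (hG.of_surjective _ hsurj)
        (Group.isSolvable_of_surjective hsurj) (hr.of_surjective _ hsurj)
        ((derivedSeries G i).map (QuotientGroup.mk' D)) (by
          rintro _ ⟨a, ha, rfl⟩ _ ⟨b, hb, rfl⟩
          rw [← commutatorElement_eq_one_iff_mul_comm, ← map_commutatorElement]
          exact (QuotientGroup.eq_one_iff _).2 (Subgroup.commutator_mem_commutator ha hb)) c
        (by rw [← hmap]; exact Subgroup.map_mono hc)
      refine ⟨n, ?_⟩
      rw [← hmap, Subgroup.map_eq_bot_iff, QuotientGroup.ker_mk'] at hn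
      exact hn
  obtain ⟨i, hi⟩ := (Group.isSolvable_def G).1 hs
  obtain ⟨c, hc⟩ := main i
  rw [hi] at hc
  exact Subgroup.nilpotent_iff_lowerCentralSeries.2 ⟨c, le_bot_iff.1 hc⟩

/-- A solvable group of finite abelian rank with no proper subgroups of finite index is
nilpotent; consequently, a solvable non-nilpotent group with no maximal subgroups has
infinite abelian rank. -/
theorem stmt14 :
    (∀ (G : Type) [Group G], IsSolvable G → HasFiniteRank G →
      (∀ H : Subgroup G, H.index ≠ 0 → H = ⊤) → Group.IsNilpotent G) ∧
    (∀ (G : Type) [Group G], IsSolvable G → (∀ M : Subgroup G, ¬ IsCoatom M) →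
      ¬ Group.IsNilpotent G → ¬ HasFiniteRank G) := by
  refine ⟨fun G _ hs hr h => nilpotent_of_noFI h hs hr, fun G _ hs hM hn hr => ?_⟩
  exact hn (nilpotent_of_noFI (noFI_of_no_coatom hM) hs hr)
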